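/- Let U be a connected open neighborhood of 0 in ℂⁿ and let X : U → ℂⁿ be a holomorphic vector field with X(0) = 0 such that DX(0) = S + N, where S is the diagonal endomorphism of ℂⁿ with diagonal entries γ = (γ₁, …, γₙ) ∈ ℂⁿ, N is nilpotent, and S∘N = N∘S; assume X is in Poincaré–Dulac normal form, i.e. [X, Xˢ] = 0 on U where Xˢ(x) = S x. Let ρ ∈ Q(γ) and let Z_ρ be the diagonal linear vector field Z_ρ(x) = (ρ₁x₁, …, ρₙxₙ). Then: (a) for every holomorphic vector field Y : U → ℂⁿ with [X, Y] = 0 on U, one has [Z_ρ, Y] = 0 on U; (b) for every holomorphic function f : U → ℂ with Df(x)(X(x)) = 0 for all x ∈ U, one has Df(x)(Z_ρ(x)) = 0 for all x ∈ U. -/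

import Mathlib

/-- `Y` is in Poincaré–Dulac normal form on the neighborhood `U` of `0`:
writing the Jordan–Chevalley decomposition `DY(0) = S + N` with `S` semisimple,
`N` nilpotent and `S ∘ N = N ∘ S`, the Lie bracket `[Y, Yˢ]` (where `Yˢ x = S x`)
vanishes on `U`. -/
def InPDNormalForm (𝕂 : Type*) [NontriviallyNormedField 𝕂] {n : ℕ}
    (Y : (Fin n → 𝕂) → (Fin n → 𝕂)) (U : Set (Fin n → 𝕂)) : Prop :=
  ∃ S N : (Fin n → 𝕂) →L[𝕂] (Fin n → 𝕂),
    fderiv 𝕂 Y 0 = S + N ∧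
    Module.End.IsSemisimple (S : Module.End 𝕂 (Fin n → 𝕂)) ∧
    IsNilpotent (N : Module.End 𝕂 (Fin n → 𝕂)) ∧
    S ∘L N = N ∘L S ∧
    ∀ x ∈ U, VectorField.lieBracket 𝕂 Y (fun y => S y) x = 0

/-- `X` admits a convergent Poincaré–Dulac normalization: there are an analytic
vector field `Y` near `0`, in Poincaré–Dulac normal form with `Y 0 = 0`, and an
analytic map `φ` near `0` with `φ 0 = 0` and `Dφ(0)` invertible, such that
`Dφ(x) (Y x) = X (φ x)` for all `x` near `0`. -/
def AdmitsPDNormalization (𝕂 : Type*) [NontriviallyNormedField 𝕂] {n : ℕ}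
    (X : (Fin n → 𝕂) → (Fin n → 𝕂)) : Prop :=
  ∃ (V : Set (Fin n → 𝕂)) (Y φ : (Fin n → 𝕂) → (Fin n → 𝕂)),
    IsOpen V ∧ (0 : Fin n → 𝕂) ∈ V ∧
    AnalyticOnNhd 𝕂 Y V ∧ AnalyticOnNhd 𝕂 φ V ∧
    Y 0 = 0 ∧ φ 0 = 0 ∧ Function.Bijective (fderiv 𝕂 φ 0) ∧
    InPDNormalForm 𝕂 Y V ∧
    ∀ x ∈ V, fderiv 𝕂 φ x (Y x) = X (φ x)

/-- `c ∈ ℤⁿ` is a resonance relation for the eigenvalues `γ ∈ ℂⁿ`: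
`Σ c_j γ_j = 0`, all `c_j ≥ -1`, `Σ c_j ≥ 1`, and at most one `c_j` is
negative. -/
def IsResonanceRelation {n : ℕ} (γ : Fin n → ℂ) (c : Fin n → ℤ) : Prop :=
  (∑ j, (c j : ℂ) * γ j = 0) ∧ (∀ j, -1 ≤ c j) ∧ (1 ≤ ∑ j, c j) ∧
    ∀ j k, c j < 0 → c k < 0 → j = k

/-- The lattice `Q(γ) ⊆ ℤⁿ` of `ρ` with `Σ ρ_j c_j = 0` for every resonance
relation `c`, and `ρ_j = ρ_k` whenever `γ_j = γ_k`. -/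
def QLattice {n : ℕ} (γ : Fin n → ℂ) : Set (Fin n → ℤ) :=
  {ρ | (∀ c, IsResonanceRelation γ c → ∑ j, ρ j * c j = 0) ∧
    ∀ j k, γ j = γ k → ρ j = ρ k}

/-- The diagonal (continuous) linear endomorphism of `ℂⁿ` with diagonal
entries `γ`. -/
noncomputable def diagCLM {n : ℕ} (γ : Fin n → ℂ) :
    (Fin n → ℂ) →L[ℂ] (Fin n → ℂ) :=
  LinearMap.toContinuousLinearMap (Matrix.toLin' (Matrix.diagonal γ))

section MultilinearAction

variable {R M ι : Type*} [CommRing R] [AddCommGroup M] [Module R M]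

namespace MultilinearMap

theorem compMultilinearMapₗ_commute {A B : Module.End R M} (hAB : Commute A B) :
    Commute (LinearMap.compMultilinearMapₗ (M₁ := fun _ : ι => M) R A)
      (LinearMap.compMultilinearMapₗ R B) := by
  ext T v
  exact LinearMap.congr_fun hAB (T v)

theorem compMultilinearMapₗ_isNilpotent {A : Module.End R M} (hA : IsNilpotent A) :
    IsNilpotent (LinearMap.compMultilinearMapₗ (M₁ := fun _ : ι => M) R A :
      Module.End R (MultilinearMap R (fun _ : ι => M) M)) := by
  obtain ⟨k, hk⟩ := hA
  have key : ∀ k : ℕ, (LinearMap.compMultilinearMapₗ (M₁ := fun _ : ι => M) R A :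
      Module.End R (MultilinearMap R (fun _ : ι => M) M)) ^ k =
        LinearMap.compMultilinearMapₗ R (A ^ k) := by
    intro k
    induction k with
    | zero => rfl
    | succ k ih => rw [pow_succ, ih, pow_succ]; rfl
  exact ⟨k, by rw [key, hk]; rfl⟩

variable [DecidableEq ι]

/-- Precomposition of the `i`-th argument of a multilinear map with an endomorphism. -/
def slotComp (i : ι) (A : Module.End R M) :
    Module.End R (MultilinearMap R (fun _ : ι => M) M) :=
  MultilinearMap.compLinearMapₗ (Function.update (fun _ => LinearMap.id) i A)

theorem slotComp_apply (i : ι) (A : Module.End R M) (T : MultilinearMap R (fun _ : ι => M) M)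
    (v : ι → M) : slotComp i A T v = T (Function.update v i (A (v i))) := by
  change T _ = _
  congr 1
  ext k
  by_cases h : k = i
  · subst h; simp
  · simp [h]

theorem slotComp_pow (i : ι) (A : Module.End R M) (k : ℕ) :
    slotComp i A ^ k = slotComp i (A ^ k) := by
  induction k with
  | zero => ext T v; simp [slotComp_apply]
  | succ k ih =>
    ext T v
    rw [pow_succ, ih]
    simp [slotComp_apply, pow_succ']

theorem slotComp_isNilpotent (i : ι) {A : Module.End R M} (hA : IsNilpotent A) :
    IsNilpotent (slotComp i A) := by
  obtain ⟨k, hk⟩ := hA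
  refine ⟨k, ?_⟩
  ext T v
  rw [slotComp_pow, hk, slotComp_apply]
  exact T.map_coord_zero i (by simp)

theorem slotComp_commute (i j : ι) {A B : Module.End R M} (hAB : Commute A B) :
    Commute (slotComp i A) (slotComp j B) := by
  ext T v
  simp only [Module.End.mul_apply, slotComp_apply]
  by_cases h : i = j
  · subst h
    have := LinearMap.congr_fun hAB (v i)
    simp only [Module.End.mul_apply] at this
    simp [this]
  · rw [Function.update_of_ne h, Function.update_of_ne (Ne.symm h), Function.update_comm h]

theorem compMultilinearMapₗ_commute_slotComp (i : ι) (A B : Module.End R M) :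
    Commute (LinearMap.compMultilinearMapₗ (M₁ := fun _ : ι => M) R A) (slotComp i B) := rfl

variable [Fintype ι]

/-- The action on multilinear maps of the Lie bracket with the linear vector field `A`. -/
def linearBracket (A : Module.End R M) : Module.End R (MultilinearMap R (fun _ : ι => M) M) :=
  ∑ i, slotComp i A - LinearMap.compMultilinearMapₗ R A

theorem linearBracket_apply (A : Module.End R M) (T : MultilinearMap R (fun _ : ι => M) M)
    (v : ι → M) :
    linearBracket A T v = ∑ i, T (Function.update v i (A (v i))) - A (T v) := by
  simp [linearBracket, slotComp_apply, LinearMap.sum_apply]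

theorem linearBracket_add (A B : Module.End R M) :
    linearBracket (ι := ι) (A + B) = linearBracket A + linearBracket B := by
  ext T v
  simp only [LinearMap.add_apply, _root_.add_apply, linearBracket_apply,
    MultilinearMap.map_update_add, Finset.sum_add_distrib]
  abel

theorem linearBracket_commute {A B : Module.End R M} (hAB : Commute A B) :
    Commute (linearBracket (ι := ι) A) (linearBracket B) := by
  refine Commute.sub_left (Commute.sub_right ?_ ?_) (Commute.sub_right ?_ ?_)
  · exact Commute.sum_left _ _ _ fun i _ => Commute.sum_right _ _ _ fun j _ =>
      slotComp_commute i j hAB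
  · exact Commute.sum_left _ _ _ fun i _ => (compMultilinearMapₗ_commute_slotComp i B A).symm
  · exact Commute.sum_right _ _ _ fun i _ => compMultilinearMapₗ_commute_slotComp i A B
  · exact compMultilinearMapₗ_commute hAB

theorem linearBracket_isNilpotent {A : Module.End R M} (hA : IsNilpotent A) :
    IsNilpotent (linearBracket (ι := ι) A) := by
  refine Commute.isNilpotent_sub ?_ ?_ (compMultilinearMapₗ_isNilpotent hA)
  · exact Commute.sum_left _ _ _ fun i _ => (compMultilinearMapₗ_commute_slotComp i A A).symm
  · exact Commute.isNilpotent_sum (fun i _ => slotComp_isNilpotent i hA)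
      fun i j _ _ => slotComp_commute i j (Commute.refl A)

/-- If `A + N` annihilates `T` and `N` is nilpotent and commutes with `A`, then a power of the
bracket with `A` annihilates `T`. -/
theorem exists_linearBracket_pow_eq_zero {A N : Module.End R M} (hN : IsNilpotent N)
    (hAN : Commute A N) {T : MultilinearMap R (fun _ : ι => M) M}
    (hT : linearBracket (A + N) T = 0) : ∃ k : ℕ, (linearBracket A ^ k) T = 0 := by
  obtain ⟨k, hk⟩ := (linearBracket_isNilpotent (ι := ι) hN).neg
  refine ⟨k, ?_⟩
  have hc : Commute (linearBracket (ι := ι) (A + N)) (-linearBracket N) := by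
    rw [linearBracket_add]
    exact ((linearBracket_commute hAN).add_left (Commute.refl _)).neg_right
  have hA : linearBracket (ι := ι) A = linearBracket (A + N) + -linearBracket N := by
    rw [linearBracket_add]; abel
  obtain ⟨Q, hQ⟩ : ∃ Q, (linearBracket (ι := ι) (A + N) + -linearBracket N) ^ k =
      Q * linearBracket (A + N) + (-linearBracket N) ^ k := by
    clear hk
    generalize linearBracket (ι := ι) (A + N) = a at hc
    generalize -linearBracket (ι := ι) N = b at hc
    induction k with
    | zero => exact ⟨0, by simp⟩
    | succ k ih =>
      obtain ⟨Q, hQ⟩ := ih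
      refine ⟨Q * a + Q * b + b ^ k, ?_⟩
      rw [pow_succ, hQ, pow_succ]
      simp only [add_mul, mul_add, mul_assoc, hc.eq]
      abel
  rw [hA, hQ, hk]
  simp [hT]

end MultilinearMap

end MultilinearAction

section Diagonal

open MultilinearMap

theorem diagCLM_apply {n : ℕ} (γ x : Fin n → ℂ) (j : Fin n) : diagCLM γ x j = γ j * x j := by
  simp [diagCLM, Matrix.mulVec_diagonal]

theorem diagCLM_eq_fun {n : ℕ} (γ : Fin n → ℂ) : (⇑(diagCLM γ)) = fun y j => γ j * y j := by
  ext y j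
  exact diagCLM_apply γ y j

/-- The coordinates of a multilinear map on basis vectors diagonalize the bracket with a diagonal
linear vector field. -/
theorem linearBracket_diagCLM_single {m n : ℕ} (γ : Fin n → ℂ)
    (T : MultilinearMap ℂ (fun _ : Fin m => Fin n → ℂ) (Fin n → ℂ)) (I : Fin m → Fin n)
    (j : Fin n) :
    linearBracket (diagCLM γ : Module.End ℂ (Fin n → ℂ)) T (fun k => Pi.single (I k) 1) j =
      (∑ k, γ (I k) - γ j) * T (fun k => Pi.single (I k) 1) j := by
  have hs : ∀ i, diagCLM γ (Pi.single i 1) = γ i • (Pi.single i 1 : Fin n → ℂ) := by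
    intro i
    ext l
    by_cases h : l = i
    · subst h; simp [diagCLM_apply]
    · simp [diagCLM_apply, h]
  rw [linearBracket_apply]
  simp only [ContinuousLinearMap.coe_coe, hs, MultilinearMap.map_update_smul,
    Function.update_eq_self, Pi.sub_apply, Finset.sum_apply, Pi.smul_apply, smul_eq_mul,
    diagCLM_apply]
  rw [sub_mul, Finset.sum_mul]

theorem linearBracket_diagCLM_pow_single {m n : ℕ} (γ : Fin n → ℂ)
    (T : MultilinearMap ℂ (fun _ : Fin m => Fin n → ℂ) (Fin n → ℂ)) (I : Fin m → Fin n)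
    (j : Fin n) (k : ℕ) :
    (linearBracket (diagCLM γ : Module.End ℂ (Fin n → ℂ)) ^ k) T (fun l => Pi.single (I l) 1) j =
      (∑ l, γ (I l) - γ j) ^ k * T (fun l => Pi.single (I l) 1) j := by
  induction k with
  | zero => simp
  | succ k ih =>
    rw [pow_succ', Module.End.mul_apply, linearBracket_diagCLM_single, ih]
    ring

theorem multilinear_eq_zero_of_single {m n : ℕ}
    {T : MultilinearMap ℂ (fun _ : Fin m => Fin n → ℂ) (Fin n → ℂ)}
    (h : ∀ (I : Fin m → Fin n) (j : Fin n), T (fun k => Pi.single (I k) 1) j = 0) : T = 0 := by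
  refine Module.Basis.ext_multilinear (fun _ => Pi.basisFun ℂ (Fin n)) fun I => ?_
  ext j
  simpa using h I j

theorem linearBracket_diagCLM_eq_zero_of_pow {m n : ℕ} {γ : Fin n → ℂ}
    {T : MultilinearMap ℂ (fun _ : Fin m => Fin n → ℂ) (Fin n → ℂ)} {k : ℕ}
    (h : (linearBracket (diagCLM γ : Module.End ℂ (Fin n → ℂ)) ^ k) T = 0) :
    linearBracket (diagCLM γ : Module.End ℂ (Fin n → ℂ)) T = 0 := by
  refine multilinear_eq_zero_of_single fun I j => ?_
  have h1 := linearBracket_diagCLM_pow_single γ T I j k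
  rw [h] at h1
  rw [linearBracket_diagCLM_single]
  rcases mul_eq_zero.1 h1.symm with h2 | h2
  · rw [eq_zero_of_pow_eq_zero h2, zero_mul]
  · rw [h2, mul_zero]

theorem QLattice.sum_eq {m n : ℕ} {γ : Fin n → ℂ} {ρ : Fin n → ℤ} (hρ : ρ ∈ QLattice γ)
    (I : Fin m → Fin n) (j : Fin n) (h : ∑ k, γ (I k) = γ j) : ∑ k, ρ (I k) = ρ j := by
  obtain ⟨hres, heq⟩ := hρ
  match m, I, h with
  | 0, I, h =>
    have hj : γ j = 0 := by simpa using h.symm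
    have := hres (Pi.single j 1) ⟨by simp [Pi.single_apply, hj], fun i => ?_, by simp, ?_⟩
    · simpa [Pi.single_apply] using this.symm
    · by_cases hi : i = j <;> simp [hi]
    · intro i k hi
      by_cases hij : i = j <;> simp [hij] at hi
  | 1, I, h => simpa using heq _ _ (by simpa using h)
  | m + 2, I, h =>
    have hcnt : ∀ i, 0 ≤ ∑ k, (if I k = i then (1 : ℤ) else 0) := fun i =>
      Finset.sum_nonneg fun k _ => by split_ifs <;> simp
    have hneg : ∀ i, (∑ k, (if I k = i then (1 : ℤ) else 0)) - (if j = i then 1 else 0) < 0 →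
        i = j := by
      intro i hi
      by_contra hij
      rw [if_neg (Ne.symm hij)] at hi
      linarith [hcnt i]
    have := hres (fun i => (∑ k, if I k = i then (1 : ℤ) else 0) - if j = i then 1 else 0)
      ⟨?_, fun i => ?_, ?_, fun i k hi hk => (hneg i hi).trans (hneg k hk).symm⟩
    · simp only [mul_sub, Finset.sum_sub_distrib, Finset.mul_sum] at this
      rw [Finset.sum_comm] at this
      simpa [sub_eq_zero] using this
    · push_cast
      simp only [sub_mul, Finset.sum_sub_distrib, Finset.sum_mul]
      rw [Finset.sum_comm]
      simpa [sub_eq_zero] using h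
    · have := hcnt i
      dsimp only
      split_ifs <;> linarith
    · rw [Finset.sum_sub_distrib, Finset.sum_comm]
      simp
      omega

/-- A multilinear map commuting with the diagonal field `γ` commutes with the diagonal
field `ρ` for `ρ` in the lattice of `γ`. -/
theorem linearBracket_diagCLM_eq_zero_of_mem_QLattice {m n : ℕ} {γ : Fin n → ℂ} {ρ : Fin n → ℤ}
    (hρ : ρ ∈ QLattice γ) {T : MultilinearMap ℂ (fun _ : Fin m => Fin n → ℂ) (Fin n → ℂ)}
    (h : linearBracket (diagCLM γ : Module.End ℂ (Fin n → ℂ)) T = 0) :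
    linearBracket (diagCLM (fun j => (ρ j : ℂ)) : Module.End ℂ (Fin n → ℂ)) T = 0 := by
  refine multilinear_eq_zero_of_single fun I j => ?_
  have h1 := linearBracket_diagCLM_single γ T I j
  rw [h] at h1
  rw [linearBracket_diagCLM_single]
  rcases mul_eq_zero.1 h1.symm with h2 | h2
  · have := QLattice.sum_eq hρ I j (sub_eq_zero.1 h2)
    rw [← this]
    simp
  · rw [h2, mul_zero]

end Diagonal

section Derivatives

open VectorField MultilinearMap Topology Filter
open scoped ContDiff

variable {E : Type*} [NormedAddCommGroup E] [NormedSpace ℂ E]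

theorem iteratedFDeriv_succ_eq_iteratedFDeriv_fderiv_apply {V : E → E} {x : E}
    (hV : ContDiffAt ℂ ω V x) {m : ℕ} (v : Fin (m + 1) → E) :
    iteratedFDeriv ℂ (m + 1) V x v =
      iteratedFDeriv ℂ m (fun y => fderiv ℂ V y (v (Fin.last m))) x (Fin.init v) := by
  have h := (ContinuousLinearMap.apply ℂ E (v (Fin.last m))).iteratedFDeriv_comp_left
    (hV.fderiv_right (m := ω) (by simp)) (i := m) le_top
  rw [iteratedFDeriv_succ_apply_right]
  exact (congrArg (fun T => T (Fin.init v)) h).symm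

theorem lieBracket_clm_left (A : E →L[ℂ] E) (V : E → E) :
    lieBracket ℂ A V = fun x => fderiv ℂ V x (A x) - A (V x) := by
  ext x
  simp [lieBracket]

theorem ContDiffAt.fderiv_apply_const {V : E → E} {x : E} (hV : ContDiffAt ℂ ω V x) (w : E) :
    ContDiffAt ℂ ω (fun y => fderiv ℂ V y w) x :=
  (hV.fderiv_right (m := ω) (by simp)).clm_apply contDiffAt_const

theorem fderiv_lieBracket_clm_left (A : E →L[ℂ] E) {V : E → E} {x : E}
    (hV : ContDiffAt ℂ ω V x) (w : E) :
    fderiv ℂ (lieBracket ℂ A V) x w =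
      lieBracket ℂ A (fun y => fderiv ℂ V y w) x + fderiv ℂ V x (A w) := by
  have hD : DifferentiableAt ℂ (fderiv ℂ V) x :=
    (hV.fderiv_right (m := ω) (by simp)).differentiableAt (by simp)
  have hV' : DifferentiableAt ℂ V x := hV.differentiableAt (by simp)
  have hsymm : fderiv ℂ (fderiv ℂ V) x w (A x) = fderiv ℂ (fderiv ℂ V) x (A x) w :=
    hV.isSymmSndFDerivAt (by simp) _ _
  simp only [lieBracket_clm_left]
  rw [fderiv_fun_sub (hD.clm_apply A.differentiableAt) (by fun_prop),
    fderiv_clm_apply hD A.differentiableAt, fderiv_clm_apply hD (differentiableAt_const w)]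
  have : fderiv ℂ (fun y => A (V y)) x = A.comp (fderiv ℂ V x) :=
    (A.hasFDerivAt.comp x hV'.hasFDerivAt).fderiv
  simp [this, hsymm]
  abel

/-- The Taylor coefficients at `0` of the bracket with a linear vector field. -/
theorem iteratedFDeriv_lieBracket_clm_left (A : E →L[ℂ] E) {m : ℕ} {V : E → E}
    (hV : ContDiffAt ℂ ω V 0) (v : Fin m → E) :
    iteratedFDeriv ℂ m (lieBracket ℂ A V) 0 v =
      linearBracket (A : Module.End ℂ E) (iteratedFDeriv ℂ m V 0).toMultilinearMap v := by
  induction m generalizing V with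
  | zero => simp [linearBracket_apply, lieBracket_clm_left]
  | succ m ih =>
    have hA : ContDiffAt ℂ ω A (0 : E) := A.contDiff.contDiffAt
    have hev : (fun y => fderiv ℂ (lieBracket ℂ A V) y (v (Fin.last m))) =ᶠ[𝓝 0]
        lieBracket ℂ A (fun y => fderiv ℂ V y (v (Fin.last m))) +
          fun y => fderiv ℂ V y (A (v (Fin.last m))) := by
      filter_upwards [hV.eventually (by simp)] with y hy
      exact fderiv_lieBracket_clm_left A hy _
    have hW := hV.fderiv_apply_const (v (Fin.last m))
    rw [iteratedFDeriv_succ_eq_iteratedFDeriv_fderiv_apply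
        (hA.lieBracket_vectorField hV (by simp)),
      (hev.iteratedFDeriv ℂ m).self_of_nhds,
      iteratedFDeriv_add_apply ((hA.lieBracket_vectorField hW (m := ω) (by simp)).of_le le_top)
        ((hV.fderiv_apply_const _).of_le le_top),
      _root_.add_apply, ih hW]
    simp only [linearBracket_apply, ContinuousMultilinearMap.coe_coe, Fin.sum_univ_castSucc,
      ContinuousLinearMap.coe_coe, iteratedFDeriv_succ_eq_iteratedFDeriv_fderiv_apply hV,
      Fin.init_update_castSucc, Fin.init_update_last, Function.update_self]
    have hne : ∀ i : Fin m, Fin.last m ≠ i.castSucc := fun i => (Fin.castSucc_lt_last i).ne'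
    simp only [Function.update_of_ne (hne _), Fin.init]
    abel

theorem eventuallyEq_zero_of_iteratedFDeriv_eq_zero [CompleteSpace E] {f : E → E} {x : E}
    (hf : AnalyticAt ℂ f x) (h : ∀ m, iteratedFDeriv ℂ m f x = 0) : f =ᶠ[𝓝 x] 0 := by
  obtain ⟨p, r, hp⟩ := hf
  filter_upwards [Metric.eball_mem_nhds x hp.r_pos] with y hy
  have hs := hp.hasSum_iteratedFDeriv (y := y - x) (by simpa [edist_eq_enorm_sub] using hy)
  simp only [h, add_sub_cancel] at hs
  exact hs.unique (by simp)

theorem iteratedFDeriv_clm_apply_eq_zero {U : Set E} (hU : IsOpen U) {x : E} (hx : x ∈ U)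
    {f : E → E →L[ℂ] E} {g : E → E} (hf : ContDiffOn ℂ ω f U) (hg : ContDiffOn ℂ ω g U) {m : ℕ}
    (h : ∀ i ≤ m, iteratedFDeriv ℂ i f x = 0 ∨ iteratedFDeriv ℂ (m - i) g x = 0) :
    iteratedFDeriv ℂ m (fun y => f y (g y)) x = 0 := by
  have hle := norm_iteratedFDerivWithin_clm_apply hf hg hU.uniqueDiffOn hx (n := m) le_top
  simp only [iteratedFDerivWithin_of_isOpen _ hU hx] at hle
  rw [← norm_le_zero_iff]
  refine hle.trans (Finset.sum_nonpos fun i hi => ?_)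
  rcases h i (by simpa [Nat.lt_succ_iff] using hi) with h | h <;> simp [h]

/-- The lowest-order Taylor coefficient of a field commuting with `X` is annihilated by the bracket
with the linear part of `X`. -/
theorem iteratedFDeriv_lieBracket_linearPart_eq_zero {U : Set E} (hU : IsOpen U)
    (h0 : (0 : E) ∈ U) {X W : E → E} (hX : ContDiffOn ℂ ω X U) (hW : ContDiffOn ℂ ω W U)
    (hX0 : X 0 = 0) (hXW : ∀ x ∈ U, lieBracket ℂ X W x = 0) {m : ℕ}
    (hm : ∀ i < m, iteratedFDeriv ℂ i W 0 = 0) :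
    iteratedFDeriv ℂ m (lieBracket ℂ (fderiv ℂ X 0) W) 0 = 0 := by
  set A := fderiv ℂ X 0 with hA
  have hdX : ContDiffOn ℂ ω (fun y => fderiv ℂ X y - A) U :=
    (hX.fderiv_of_isOpen hU (by simp)).sub contDiffOn_const
  have hR : ContDiffOn ℂ ω (fun y => X y - A y) U := hX.sub A.contDiff.contDiffOn
  have hdW : ContDiffOn ℂ ω (fderiv ℂ W) U := hW.fderiv_of_isOpen hU (by simp)
  have hev : lieBracket ℂ A W =ᶠ[𝓝 0] fun y =>
      (fderiv ℂ X y - A) (W y) - fderiv ℂ W y (X y - A y) := by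
    filter_upwards [hU.mem_nhds h0] with y hy
    have h := hXW y hy
    rw [lieBracket_eq, sub_eq_zero] at h
    simp [lieBracket_clm_left, h]
  have hleft : iteratedFDeriv ℂ m (fun y => (fderiv ℂ X y - A) (W y)) 0 = 0 := by
    refine iteratedFDeriv_clm_apply_eq_zero hU h0 hdX hW fun i hi => ?_
    rcases Nat.eq_zero_or_pos i with rfl | hi0
    · left
      ext v : 1
      simp [hA]
    · exact Or.inr (hm _ (by omega))
  have hright : iteratedFDeriv ℂ m (fun y => fderiv ℂ W y (X y - A y)) 0 = 0 := by
    refine iteratedFDeriv_clm_apply_eq_zero hU h0 hdW hR fun i hi => ?_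
    rcases lt_or_ge (i + 1) m with h | h
    · left
      rw [← norm_eq_zero, norm_iteratedFDeriv_fderiv, hm _ h, norm_zero]
    · right
      have hd : DifferentiableAt ℂ X 0 :=
        (hX.contDiffAt (hU.mem_nhds h0)).differentiableAt (by simp)
      obtain h' | h' : m - i = 0 ∨ m - i = 1 := by omega
      · rw [h']
        ext v
        simp [hX0]
      · rw [h']
        ext v
        rw [iteratedFDeriv_one_apply, fderiv_fun_sub hd A.differentiableAt, A.fderiv, ← hA]
        simp
  rw [(hev.iteratedFDeriv ℂ m).self_of_nhds, fun_iteratedFDeriv_sub_apply, hleft, hright, sub_zero]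
  · exact (((hdX.clm_apply hW).contDiffAt (hU.mem_nhds h0)).of_le le_top)
  · exact (((hdW.clm_apply hR).contDiffAt (hU.mem_nhds h0)).of_le le_top)

end Derivatives

section NormalForm

open VectorField MultilinearMap Topology Filter
open scoped ContDiff

variable {n : ℕ} {U : Set (Fin n → ℂ)} {X : (Fin n → ℂ) → (Fin n → ℂ)} {γ : Fin n → ℂ}
  {N : (Fin n → ℂ) →L[ℂ] (Fin n → ℂ)}

/-- A field commuting with a field in normal form commutes, at the level of Taylor coefficients,
with its semisimple linear part. -/
theorem linearBracket_iteratedFDeriv_eq_zero_of_normalForm (hU : IsOpen U)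
    (h0U : (0 : Fin n → ℂ) ∈ U) (hX : ContDiffOn ℂ ω X U) (hX0 : X 0 = 0)
    (hJC : fderiv ℂ X 0 = diagCLM γ + N)
    (hnil : IsNilpotent (N : Module.End ℂ (Fin n → ℂ)))
    (hSN : diagCLM γ ∘L N = N ∘L diagCLM γ)
    (hNF : ∀ x ∈ U, lieBracket ℂ X (diagCLM γ) x = 0)
    {Y : (Fin n → ℂ) → (Fin n → ℂ)} (hY : ContDiffOn ℂ ω Y U)
    (hXY : ∀ x ∈ U, lieBracket ℂ X Y x = 0) (m : ℕ) :
    linearBracket (diagCLM γ : Module.End ℂ (Fin n → ℂ))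
      (iteratedFDeriv ℂ m Y 0).toMultilinearMap = 0 := by
  have hat : ∀ {V : (Fin n → ℂ) → (Fin n → ℂ)}, ContDiffOn ℂ ω V U → ∀ x ∈ U,
      ContDiffAt ℂ ω V x := fun hV x hx => hV.contDiffAt (hU.mem_nhds hx)
  have hS : ∀ x, ContDiffAt ℂ ω (diagCLM γ) x := fun x => (diagCLM γ).contDiff.contDiffAt
  set W := lieBracket ℂ (diagCLM γ) Y with hWdef
  have hW : ContDiffOn ℂ ω W U := fun x hx =>
    ((hS x).lieBracket_vectorField (hat hY x hx) (by simp)).contDiffWithinAt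
  have hXW : ∀ x ∈ U, lieBracket ℂ X W x = 0 := by
    intro x hx
    have h1 : lieBracket ℂ X (diagCLM γ) =ᶠ[𝓝 x] 0 := by
      filter_upwards [hU.mem_nhds hx] with y hy using hNF y hy
    have h2 : lieBracket ℂ X Y =ᶠ[𝓝 x] 0 := by
      filter_upwards [hU.mem_nhds hx] with y hy using hXY y hy
    rw [hWdef, leibniz_identity_lieBracket (n := ω) (by simp) (hat hX x hx) (hS x) (hat hY x hx),
      h1.lieBracket_vectorField_eq EventuallyEq.rfl, EventuallyEq.rfl.lieBracket_vectorField_eq h2]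
    simp
  have hcoeff : ∀ m, (iteratedFDeriv ℂ m W 0).toMultilinearMap =
      linearBracket (diagCLM γ : Module.End ℂ (Fin n → ℂ))
        (iteratedFDeriv ℂ m Y 0).toMultilinearMap := fun m =>
    MultilinearMap.ext fun v => iteratedFDeriv_lieBracket_clm_left _ (hat hY 0 h0U) v
  have hWzero : ∀ m, iteratedFDeriv ℂ m W 0 = 0 := by
    intro m
    induction m using Nat.strong_induction_on with
    | _ m ih =>
      have hlin := iteratedFDeriv_lieBracket_linearPart_eq_zero hU h0U hX hW hX0 hXW ih
      have hT : linearBracket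
          ((diagCLM γ : Module.End ℂ (Fin n → ℂ)) + (N : Module.End ℂ (Fin n → ℂ)))
          (iteratedFDeriv ℂ m W 0).toMultilinearMap = 0 := by
        refine MultilinearMap.ext fun v => ?_
        have := iteratedFDeriv_lieBracket_clm_left (fderiv ℂ X 0) (hat hW 0 h0U) v
        rw [hlin, hJC] at this
        exact this.symm
      have hcomm : Commute (diagCLM γ : Module.End ℂ (Fin n → ℂ))
          (N : Module.End ℂ (Fin n → ℂ)) :=
        LinearMap.ext fun x => DFunLike.congr_fun hSN x
      obtain ⟨k, hk⟩ := exists_linearBracket_pow_eq_zero hnil hcomm hT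
      rw [hcoeff, ← Module.End.mul_apply, ← pow_succ] at hk
      have := (hcoeff m).trans (linearBracket_diagCLM_eq_zero_of_pow hk)
      exact ContinuousMultilinearMap.toMultilinearMap_injective this
  rw [← hcoeff, hWzero]
  rfl

/-- A field commuting with a field in normal form commutes with the diagonal fields of the
lattice. -/
theorem lieBracket_diagCLM_eq_zero_of_normalForm (hU : IsOpen U) (hUc : IsPreconnected U)
    (h0U : (0 : Fin n → ℂ) ∈ U) (hX : AnalyticOnNhd ℂ X U) (hX0 : X 0 = 0)
    (hJC : fderiv ℂ X 0 = diagCLM γ + N)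
    (hnil : IsNilpotent (N : Module.End ℂ (Fin n → ℂ)))
    (hSN : diagCLM γ ∘L N = N ∘L diagCLM γ)
    (hNF : ∀ x ∈ U, lieBracket ℂ X (diagCLM γ) x = 0)
    {ρ : Fin n → ℤ} (hρ : ρ ∈ QLattice γ)
    {Y : (Fin n → ℂ) → (Fin n → ℂ)} (hY : AnalyticOnNhd ℂ Y U)
    (hXY : ∀ x ∈ U, lieBracket ℂ X Y x = 0) :
    ∀ x ∈ U, lieBracket ℂ (diagCLM fun j => (ρ j : ℂ)) Y x = 0 := by
  set Z := diagCLM fun j => (ρ j : ℂ) with hZ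
  have han : AnalyticOnNhd ℂ (lieBracket ℂ Z Y) U := by
    intro x hx
    exact (Z.contDiff.contDiffAt.lieBracket_vectorField (m := ω) (n := ω)
      (hY x hx).contDiffAt (by simp)).analyticAt
  refine han.eqOn_zero_of_preconnected_of_eventuallyEq_zero hUc h0U
    (eventuallyEq_zero_of_iteratedFDeriv_eq_zero (han 0 h0U) fun m => ?_)
  ext1 v
  rw [iteratedFDeriv_lieBracket_clm_left _ (hY 0 h0U).contDiffAt, hZ,
    linearBracket_diagCLM_eq_zero_of_mem_QLattice hρ
      (linearBracket_iteratedFDeriv_eq_zero_of_normalForm hU h0U (hX.contDiffOn hU.uniqueDiffOn)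
        hX0 hJC hnil hSN hNF
        (hY.contDiffOn hU.uniqueDiffOn) hXY m)]
  rfl

/-- If the field vanishes near the origin, the lattice of its eigenvalues is trivial. -/
theorem eq_zero_of_eventuallyEq_zero_of_mem_QLattice (hX : X =ᶠ[𝓝 0] 0)
    (hJC : fderiv ℂ X 0 = diagCLM γ + N)
    (hnil : IsNilpotent (N : Module.End ℂ (Fin n → ℂ)))
    {ρ : Fin n → ℤ} (hρ : ρ ∈ QLattice γ) : ρ = 0 := by
  have hfd : fderiv ℂ X 0 = 0 := by
    rw [hX.fderiv_eq]
    exact fderiv_const_apply 0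
  have hγN : (diagCLM γ : Module.End ℂ (Fin n → ℂ)) = -N := by
    ext1 i
    exact LinearMap.ext fun c => by
      have := congrArg (fun L => L (Pi.single i c)) (hJC.symm.trans hfd)
      exact eq_neg_of_add_eq_zero_left this
  have hnil' : IsNilpotent (diagCLM γ : Module.End ℂ (Fin n → ℂ)) := hγN ▸ hnil.neg
  obtain ⟨k, hk⟩ := hnil'
  have hpow : ∀ (k : ℕ) (x : Fin n → ℂ) (j : Fin n),
      ((diagCLM γ : Module.End ℂ (Fin n → ℂ)) ^ k) x j = γ j ^ k * x j := by
    intro k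
    induction k with
    | zero => simp
    | succ k ih =>
      intro x j
      rw [pow_succ', Module.End.mul_apply, ContinuousLinearMap.coe_coe, diagCLM_apply, ih]
      ring
  ext j
  have hj : γ j ^ k = 0 := by
    have := hpow k 1 j
    rw [hk] at this
    simpa using this.symm
  have := QLattice.sum_eq hρ Fin.elim0 j (by simp [eq_zero_of_pow_eq_zero hj])
  simpa using this.symm

end NormalForm

/-- **Lemma on commuting fields and first integrals of a vector field in
normal form** (Zung). If `X` is a holomorphic vector field in Poincaré–Dulac
normal form with semisimple linear part `diag γ`, and `ρ ∈ Q(γ)`, then the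
diagonal vector field `Z_ρ(x) = (ρ₁x₁, …, ρₙxₙ)` commutes with every
holomorphic vector field commuting with `X`, and annihilates every
holomorphic first integral of `X`. -/
theorem normalForm_lemma_commute_firstIntegral
    (n : ℕ) (U : Set (Fin n → ℂ)) (hUopen : IsOpen U)
    (hUconn : IsConnected U) (h0U : (0 : Fin n → ℂ) ∈ U)
    (X : (Fin n → ℂ) → (Fin n → ℂ))
    (hXan : AnalyticOnNhd ℂ X U) (hX0 : X 0 = 0)
    (γ : Fin n → ℂ) (N : (Fin n → ℂ) →L[ℂ] (Fin n → ℂ))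
    (hJC : fderiv ℂ X 0 = diagCLM γ + N)
    (hnil : IsNilpotent (N : Module.End ℂ (Fin n → ℂ)))
    (hSN : diagCLM γ ∘L N = N ∘L diagCLM γ)
    (hNF : ∀ x ∈ U,
      VectorField.lieBracket ℂ X (fun y j => γ j * y j) x = 0)
    (ρ : Fin n → ℤ) (hρ : ρ ∈ QLattice γ) :
    (∀ Y : (Fin n → ℂ) → (Fin n → ℂ), AnalyticOnNhd ℂ Y U →
      (∀ x ∈ U, VectorField.lieBracket ℂ X Y x = 0) →
      ∀ x ∈ U,
        VectorField.lieBracket ℂ (fun y j => (ρ j : ℂ) * y j) Y x = 0) ∧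
    (∀ f : (Fin n → ℂ) → ℂ, AnalyticOnNhd ℂ f U →
      (∀ x ∈ U, fderiv ℂ f x (X x) = 0) →
      ∀ x ∈ U, fderiv ℂ f x (fun j => (ρ j : ℂ) * x j) = 0) := by
  have hS : (fun (y : Fin n → ℂ) j => γ j * y j) = diagCLM γ := (diagCLM_eq_fun γ).symm
  have hZ : (fun (y : Fin n → ℂ) j => (ρ j : ℂ) * y j) = diagCLM fun j => (ρ j : ℂ) :=
    (diagCLM_eq_fun _).symm
  rw [hS] at hNF
  have key : ∀ Y : (Fin n → ℂ) → (Fin n → ℂ), AnalyticOnNhd ℂ Y U →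
      (∀ x ∈ U, VectorField.lieBracket ℂ X Y x = 0) →
      ∀ x ∈ U, VectorField.lieBracket ℂ (fun y j => (ρ j : ℂ) * y j) Y x = 0 := by
    intro Y hY hXY
    rw [hZ]
    exact lieBracket_diagCLM_eq_zero_of_normalForm hUopen hUconn.isPreconnected h0U hXan hX0 hJC
      hnil hSN hNF hρ hY hXY
  refine ⟨key, fun f hf hfX => ?_⟩
  set Z : (Fin n → ℂ) → (Fin n → ℂ) := fun y j => (ρ j : ℂ) * y j with hZdef
  -- `f • X` commutes with `X`, hence with `Z`, which gives `Z(f) • X = 0`.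
  have hfX' : ∀ x ∈ U, fderiv ℂ f x (Z x) • X x = 0 := by
    intro x hx
    have h1 := key (fun y => f y • X y) (hf.smul hXan) (fun y hy => by
      rw [VectorField.lieBracket_smul_right (hf y hy).differentiableAt
        (hXan y hy).differentiableAt, hfX y hy]
      simp) x hx
    rw [VectorField.lieBracket_smul_right (hf x hx).differentiableAt
      (hXan x hx).differentiableAt, key X hXan (by simp) x hx] at h1
    simpa using h1
  by_cases hXz : ∃ x ∈ U, X x ≠ 0
  · obtain ⟨x₀, hx₀, hne⟩ := hXz
    have hZan : ∀ x, ContDiffAt ℂ ⊤ Z x := fun x => by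
      rw [hZ]
      exact (diagCLM fun j => (ρ j : ℂ)).contDiff.contDiffAt
    have hg : AnalyticOnNhd ℂ (fun x => fderiv ℂ f x (Z x)) U := fun x hx =>
      ((hf.fderiv x hx).contDiffAt.clm_apply (hZan x)).analyticAt
    refine hg.eqOn_zero_of_preconnected_of_eventuallyEq_zero hUconn.isPreconnected hx₀ ?_
    filter_upwards [hUopen.mem_nhds hx₀, (hXan x₀ hx₀).continuousAt.eventually_ne hne] with x hx hXx
    exact (smul_eq_zero.1 (hfX' x hx)).resolve_right hXx
  · push Not at hXz
    have hρ0 := eq_zero_of_eventuallyEq_zero_of_mem_QLattice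
      (by filter_upwards [hUopen.mem_nhds h0U] with x hx using hXz x hx) hJC hnil hρ
    intro x _
    have : Z x = 0 := by
      ext j
      simp [hZdef, hρ0]
    change fderiv ℂ f x (Z x) = 0
    rw [this, map_zero]
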